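/- (Extended Bernstein inequality for unbounded variables.) Let {Z(s) : s ∈ Z^N} be a strong mixing random field with E[Z(s)] = 0, E[Z(s)²] ≤ σ² < ∞, whose tail distribution satisfies P(|Z(s)| > z) ≤ κ0·exp(−κ1·z^τ) for constants κ0, κ1, τ > 0. Then, with the blocking notation ñ, P̃, q̲, p̄, ᾱ_k as in the Bernstein inequality for spatial lattice processes, for any B > 0 and ε > 0 and any admissible β > 0 (with 2^{N+1}·B·P̃·e·β < 1): P( |Σ_{s∈I_n} Z(s)| > ε ) ≤ (12/(ε·τ))·κ0·κ1^{−1/τ}·Γ(1/τ, κ1·B^τ)·|I_n| + 2·exp{ 12√e·2^N·(ñ/P̃)·α(q̲)^{P̃/[ñ(2^N+1)]} } · exp{ −βε/3 } · exp{ 2^{3N}·β²·e·(σ² + 48·B²·γ·ᾱ_{p̄})·ñ }, where Γ denotes the upper incomplete gamma function and γ is a constant depending only on N. -/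

import Mathlib

open MeasureTheory Filter

noncomputable section

/-- `ℓ∞`-distance between two lattice points of `ℤ^N`. -/
def latDist {N : ℕ} (s t : Fin N → ℤ) : ℕ := Finset.univ.sup fun i => (s i - t i).natAbs

/-- The σ-algebra generated by the random variables `Z(s)`, `s ∈ I`. -/
def fieldSigma {N : ℕ} {Ω E : Type*} [MeasurableSpace E]
    (Z : (Fin N → ℤ) → Ω → E) (I : Set (Fin N → ℤ)) : MeasurableSpace Ω :=
  ⨆ s ∈ I, MeasurableSpace.comap (Z s) inferInstance

/-- The spatial α-mixing coefficient. -/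
def alphaMix {N : ℕ} {Ω E : Type*} [MeasurableSpace Ω] [MeasurableSpace E]
    (P : Measure Ω) (Z : (Fin N → ℤ) → Ω → E) (k : ℕ) : ℝ :=
  sSup { x : ℝ | ∃ I J : Set (Fin N → ℤ),
    (∀ s ∈ I, ∀ t ∈ J, k ≤ latDist s t) ∧
    ∃ A B : Set Ω, MeasurableSet[fieldSigma Z I] A ∧ MeasurableSet[fieldSigma Z J] B ∧
      x = |(P (A ∩ B)).toReal - (P A).toReal * (P B).toReal| }

/-- `ᾱ_k = Σ_{u=1}^k u^{N−1} α(u)`. -/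
def abar {N : ℕ} {Ω E : Type*} [MeasurableSpace Ω] [MeasurableSpace E]
    (P : Measure Ω) (Z : (Fin N → ℤ) → Ω → E) (k : ℕ) : ℝ :=
  ∑ u ∈ Finset.Icc 1 k, (u : ℝ) ^ (N - 1) * alphaMix P Z u

/-- The observation window `I_n = {s ∈ ℤ^N : e_N ≤ s ≤ n}`. -/
def obsIdx {N : ℕ} (n : Fin N → ℕ) : Finset (Fin N → ℤ) :=
  Finset.Icc (fun _ => 1) (fun i => (n i : ℤ))

/-- The upper incomplete gamma function `Γ(a,x) = ∫_x^∞ t^{a−1} e^{−t} dt`. -/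
def uGamma (a x : ℝ) : ℝ := ∫ t in Set.Ioi x, t ^ (a - 1) * Real.exp (-t)

/-- Two finite measures that are uniformly within `c` of each other on a sub-σ-algebra integrate
bounded nonnegative functions measurable for that σ-algebra to within `c` times the bound. -/
theorem abs_integral_sub_integral_le_of_abs_measureReal_sub_le {Ω : Type*} {m m0 : MeasurableSpace Ω}
    (hm : m ≤ m0) (μ ν : Measure Ω) [IsFiniteMeasure μ] [IsFiniteMeasure ν] {c b : ℝ}
    (hb : 0 ≤ b) (h : ∀ A, MeasurableSet[m] A → |μ.real A - ν.real A| ≤ c)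
    {f : Ω → ℝ} (hf : Measurable[m] f) (f0 : ∀ ω, 0 ≤ f ω) (fb : ∀ ω, f ω ≤ b) :
    |∫ ω, f ω ∂μ - ∫ ω, f ω ∂ν| ≤ c * b := by
  have hf0 : Measurable f := hf.mono hm le_rfl
  have hint : ∀ ρ : Measure Ω, IsFiniteMeasure ρ → Integrable f ρ := fun ρ _ =>
    Integrable.of_bound hf0.aestronglyMeasurable b
      (Eventually.of_forall fun ω => by rw [Real.norm_of_nonneg (f0 ω)]; exact fb ω)
  have key : ∀ ρ : Measure Ω, IsFiniteMeasure ρ →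
      IntegrableOn (fun t : ℝ => ρ.real {a | t ≤ f a}) (Set.Ioc 0 b) := by
    intro ρ _
    have hanti : Antitone (fun t : ℝ => ρ.real {a | t ≤ f a}) := fun s t hst =>
      measureReal_mono (fun a (ha : t ≤ f a) => hst.trans ha)
    exact (hanti.antitoneOn _).integrableOn_isCompact isCompact_Icc |>.mono_set
      Set.Ioc_subset_Icc_self
  rw [(hint μ inferInstance).integral_eq_integral_Ioc_meas_le (Eventually.of_forall f0)
      (Eventually.of_forall fb),
    (hint ν inferInstance).integral_eq_integral_Ioc_meas_le (Eventually.of_forall f0)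
      (Eventually.of_forall fb), ← integral_sub (key μ inferInstance) (key ν inferInstance)]
  have := norm_setIntegral_le_of_norm_le_const (μ := volume) (s := Set.Ioc 0 b) (C := c)
    (f := fun t : ℝ => μ.real {a | t ≤ f a} - ν.real {a | t ≤ f a}) (by simp)
    (fun t _ => h _ (hf measurableSet_Ici))
  simpa [Measure.real, hb] using this

/-- Covariance inequality for bounded nonnegative random variables under `α`-mixing. -/
theorem abs_integral_mul_sub_le_of_mixing {Ω : Type*} {m1 m2 m0 : MeasurableSpace Ω}
    (h1 : m1 ≤ m0) (h2 : m2 ≤ m0) (P : Measure Ω) [IsProbabilityMeasure P] {α a b : ℝ}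
    (ha : 0 ≤ a) (hb : 0 ≤ b)
    (h : ∀ A B, MeasurableSet[m1] A → MeasurableSet[m2] B →
      |P.real (A ∩ B) - P.real A * P.real B| ≤ α)
    {X Y : Ω → ℝ} (hX : Measurable[m1] X) (hY : Measurable[m2] Y)
    (X0 : ∀ ω, 0 ≤ X ω) (Xa : ∀ ω, X ω ≤ a) (Y0 : ∀ ω, 0 ≤ Y ω) (Yb : ∀ ω, Y ω ≤ b) :
    |∫ ω, X ω * Y ω ∂P - (∫ ω, X ω ∂P) * ∫ ω, Y ω ∂P| ≤ α * a * b := by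
  have hY0 : Measurable Y := hY.mono h2 le_rfl
  have hYint : Integrable Y P := Integrable.of_bound hY0.aestronglyMeasurable b
    (Eventually.of_forall fun ω => by rw [Real.norm_of_nonneg (Y0 ω)]; exact Yb ω)
  have step : ∀ A, MeasurableSet[m1] A →
      |∫ ω in A, Y ω ∂P - P.real A * ∫ ω, Y ω ∂P| ≤ α * b := by
    intro A hA
    have := P.smul_finite (measure_ne_top P A)
    have := abs_integral_sub_integral_le_of_abs_measureReal_sub_le h2 (P.restrict A) (P A • P)
      (c := α) hb (fun B hB => by
        rw [measureReal_restrict_apply (h2 _ hB), Set.inter_comm, measureReal_ennreal_smul_apply]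
        exact h A B hA hB) hY Y0 Yb
    rwa [integral_smul_measure] at this
  set μ : Measure Ω := P.withDensity fun ω => ENNReal.ofReal (Y ω) with hμ
  have hfin : IsFiniteMeasure μ := isFiniteMeasure_withDensity_ofReal hYint.2
  have := P.smul_finite (ENNReal.ofReal_ne_top (r := ∫ ω, Y ω ∂P))
  have := abs_integral_sub_integral_le_of_abs_measureReal_sub_le h1 μ
    (ENNReal.ofReal (∫ ω, Y ω ∂P) • P) (c := α * b) ha (fun A hA => by
      rw [measureReal_ennreal_smul_apply, ENNReal.toReal_ofReal (integral_nonneg Y0),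
        Measure.real, hμ, withDensity_apply _ (h1 _ hA),
        ← ofReal_integral_eq_lintegral_ofReal hYint.integrableOn (Eventually.of_forall Y0),
        ENNReal.toReal_ofReal (integral_nonneg Y0), mul_comm]
      exact step A hA) hX X0 Xa
  rw [integral_smul_measure, ENNReal.toReal_ofReal (integral_nonneg Y0), hμ,
    integral_withDensity_eq_integral_toReal_smul (by fun_prop) (by simp)] at this
  simp only [ENNReal.toReal_ofReal (Y0 _), smul_eq_mul] at this
  simpa only [mul_comm, mul_left_comm, mul_assoc] using this

section Mixing

variable {N : ℕ} {Ω : Type*} {Z : (Fin N → ℤ) → Ω → ℝ}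

theorem comap_le_fieldSigma {I : Set (Fin N → ℤ)} {s : Fin N → ℤ} (hs : s ∈ I) :
    MeasurableSpace.comap (Z s) inferInstance ≤ fieldSigma Z I :=
  le_iSup₂_of_le s hs le_rfl

theorem fieldSigma_mono {I J : Set (Fin N → ℤ)} (h : I ⊆ J) :
    fieldSigma Z I ≤ fieldSigma Z J :=
  iSup₂_le fun _ hs => comap_le_fieldSigma (h hs)

variable [m0 : MeasurableSpace Ω] {P : Measure Ω}

theorem fieldSigma_le (hZ : ∀ s, Measurable (Z s)) (I : Set (Fin N → ℤ)) :
    fieldSigma Z I ≤ m0 :=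
  iSup₂_le fun s _ => (hZ s).comap_le

theorem alphaMix_nonneg (k : ℕ) : 0 ≤ alphaMix P Z k := by
  apply Real.sSup_nonneg
  rintro x ⟨I, J, -, A, B, -, -, rfl⟩
  exact abs_nonneg _

theorem alphaMix_set_le_one (P : Measure Ω) [IsProbabilityMeasure P] (A B : Set Ω) :
    |(P (A ∩ B)).toReal - (P A).toReal * (P B).toReal| ≤ 1 := by
  have hA : (P A).toReal ≤ 1 := measureReal_le_one
  have hB : (P B).toReal ≤ 1 := measureReal_le_one
  have hAB : (P (A ∩ B)).toReal ≤ 1 := measureReal_le_one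
  have hA' : 0 ≤ (P A).toReal := ENNReal.toReal_nonneg
  have hB' : 0 ≤ (P B).toReal := ENNReal.toReal_nonneg
  have hAB' : 0 ≤ (P (A ∩ B)).toReal := ENNReal.toReal_nonneg
  rw [abs_le]
  constructor <;> nlinarith [mul_nonneg hA' hB', mul_le_one₀ hA hB' hB]

variable [IsProbabilityMeasure P]

theorem alphaMix_le_one (k : ℕ) : alphaMix P Z k ≤ 1 := by
  apply Real.sSup_le _ zero_le_one
  rintro x ⟨I, J, -, A, B, -, -, rfl⟩
  exact alphaMix_set_le_one P A B

theorem le_alphaMix {k : ℕ} {I J : Set (Fin N → ℤ)} (hIJ : ∀ s ∈ I, ∀ t ∈ J, k ≤ latDist s t)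
    {A B : Set Ω} (hA : MeasurableSet[fieldSigma Z I] A) (hB : MeasurableSet[fieldSigma Z J] B) :
    |P.real (A ∩ B) - P.real A * P.real B| ≤ alphaMix P Z k := by
  refine le_csSup ⟨1, ?_⟩ ⟨I, J, hIJ, A, B, hA, hB, rfl⟩
  rintro x ⟨I, J, -, A, B, -, -, rfl⟩
  exact alphaMix_set_le_one P A B

/-- The expected product of bounded variables attached to well-separated blocks exceeds the product
of the expectations by a mixing term. -/
theorem integral_prod_le_of_separated {ι : Type*} (hZ : ∀ s, Measurable (Z s)) {k : ℕ}
    (I : ι → Set (Fin N → ℤ)) (W : ι → Ω → ℝ) {M : ℝ} (hM : 1 ≤ M) (T : Finset ι)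
    (hI : ∀ r ∈ T, ∀ r' ∈ T, r ≠ r' → ∀ s ∈ I r, ∀ t ∈ I r', k ≤ latDist s t)
    (hW : ∀ r, Measurable[fieldSigma Z (I r)] (W r)) (W0 : ∀ r ω, 0 ≤ W r ω)
    (WM : ∀ r ω, W r ω ≤ M) (W1 : ∀ r, 1 ≤ ∫ ω, W r ω ∂P) {K : ℕ} (hK : T.card ≤ K) :
    ∫ ω, ∏ r ∈ T, W r ω ∂P ≤
      (∏ r ∈ T, ∫ ω, W r ω ∂P) * (1 + T.card * alphaMix P Z k * M ^ K) := by
  classical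
  induction T using Finset.induction_on with
  | empty => simp
  | insert r T hr ih =>
    have ih := ih (fun r hr r' hr' => hI r (Finset.mem_insert_of_mem hr) r'
      (Finset.mem_insert_of_mem hr')) (by
        rw [Finset.card_insert_of_notMem hr] at hK; omega)
    have hα : 0 ≤ alphaMix P Z k := alphaMix_nonneg k
    have hprod1 : 1 ≤ ∏ r ∈ insert r T, ∫ ω, W r ω ∂P := by
      simpa using Finset.prod_le_prod (s := insert r T) (fun _ _ => zero_le_one (α := ℝ))
        (fun r _ => W1 r)
    have hcov := abs_integral_mul_sub_le_of_mixing (fieldSigma_le hZ (I r))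
      (fieldSigma_le hZ (⋃ r' ∈ T, I r')) P (α := alphaMix P Z k) (a := M) (b := M ^ T.card)
      (by positivity) (by positivity)
      (fun A B hA hB => le_alphaMix (by
        intro s hs t ht
        simp only [Set.mem_iUnion] at ht
        obtain ⟨r', hr', ht⟩ := ht
        exact hI r (Finset.mem_insert_self _ _) r' (Finset.mem_insert_of_mem hr')
          (by rintro rfl; exact hr hr') s hs t ht) hA hB)
      (X := W r) (Y := fun ω => ∏ r' ∈ T, W r' ω) (hW r)
      (Finset.measurable_fun_prod _ fun r' hr' => (hW r').mono
        (fieldSigma_mono (Set.subset_biUnion_of_mem (u := fun r => I r) hr')) le_rfl)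
      (W0 r) (WM r) (fun ω => Finset.prod_nonneg fun r' _ => W0 r' ω)
      (fun ω => (Finset.prod_le_prod (fun r' _ => W0 r' ω) fun r' _ => WM r' ω).trans_eq (by simp))
    have hpow : M * M ^ T.card ≤ M ^ K := by
      rw [← pow_succ', ← Finset.card_insert_of_notMem hr]
      exact pow_le_pow_right₀ hM hK
    have hE : 0 ≤ ∫ ω, W r ω ∂P := integral_nonneg (W0 r)
    have hαK : 0 ≤ alphaMix P Z k * M ^ K := by positivity
    calc ∫ ω, ∏ r ∈ insert r T, W r ω ∂P = ∫ ω, W r ω * ∏ r ∈ T, W r ω ∂P := by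
          simp only [Finset.prod_insert hr]
      _ ≤ (∫ ω, W r ω ∂P) * (∫ ω, ∏ r ∈ T, W r ω ∂P) + alphaMix P Z k * (M * M ^ T.card) := by
          linarith [(abs_le.mp hcov).2]
      _ ≤ (∫ ω, W r ω ∂P) *
            ((∏ r ∈ T, ∫ ω, W r ω ∂P) * (1 + T.card * alphaMix P Z k * M ^ K)) +
            alphaMix P Z k * M ^ K := by gcongr
      _ = (∏ r ∈ insert r T, ∫ ω, W r ω ∂P) * (1 + T.card * alphaMix P Z k * M ^ K) +
            1 * (alphaMix P Z k * M ^ K) := by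
          rw [Finset.prod_insert hr]; ring
      _ ≤ (∏ r ∈ insert r T, ∫ ω, W r ω ∂P) * (1 + T.card * alphaMix P Z k * M ^ K) +
            (∏ r ∈ insert r T, ∫ ω, W r ω ∂P) * (alphaMix P Z k * M ^ K) := by gcongr
      _ = _ := by
          rw [Finset.card_insert_of_notMem hr]; push_cast; ring

end Mixing

theorem latDist_le_iff {N : ℕ} {s t : Fin N → ℤ} {k : ℕ} :
    latDist s t ≤ k ↔ ∀ i, (s i - t i).natAbs ≤ k := by
  simp [latDist, Finset.sup_le_iff]

theorem natAbs_sub_le_latDist {N : ℕ} (s t : Fin N → ℤ) (i : Fin N) :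
    (s i - t i).natAbs ≤ latDist s t :=
  latDist_le_iff.mp le_rfl i

theorem latDist_eq_zero {N : ℕ} {s t : Fin N → ℤ} : latDist s t = 0 ↔ s = t := by
  rw [← Nat.le_zero, latDist_le_iff, funext_iff]
  exact forall_congr' fun i => by omega

/-- An `ℓ∞`-sphere of radius `u ≥ 1` in `ℤ^N` has at most `2 N 3^(N-1) u^(N-1)` points. -/
theorem card_filter_latDist_eq_le {N : ℕ} (s : Fin N → ℤ) (G : Finset (Fin N → ℤ)) {u : ℕ}
    (hu : 1 ≤ u) :
    ((G.filter fun t => latDist s t = u).card : ℝ) ≤ 2 * N * 3 ^ (N - 1) * (u : ℝ) ^ (N - 1) := by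
  classical
  set ball : ℕ → Finset (Fin N → ℤ) := fun k =>
    Finset.Icc (fun i => s i - k) (fun i => s i + k) with hball
  have hmem : ∀ k t, t ∈ ball k ↔ latDist s t ≤ k := by
    intro k t
    rw [hball, latDist_le_iff, Finset.mem_Icc, Pi.le_def, Pi.le_def, ← forall_and]
    exact forall_congr' fun i => by omega
  have hcard : ∀ k, (ball k).card = (2 * k + 1) ^ N := by
    intro k
    rw [hball, Pi.card_Icc]
    simp only [Int.card_Icc]
    rw [Finset.prod_congr rfl (g := fun _ => 2 * k + 1) (fun i _ => by omega)]
    simp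
  have hsub : ball (u - 1) ⊆ ball u := fun t => by
    simp only [hmem]; omega
  have h1 : (G.filter fun t => latDist s t = u) ⊆ ball u \ ball (u - 1) := by
    intro t ht
    rw [Finset.mem_filter] at ht
    rw [Finset.mem_sdiff, hmem, hmem]
    omega
  have h2 := Finset.card_le_card h1
  rw [Finset.card_sdiff_of_subset hsub, hcard, hcard] at h2
  have h3 : (2 * (u - 1) + 1) ^ N ≤ (2 * u + 1) ^ N := Nat.pow_le_pow_left (by omega) N
  have h4 : ((G.filter fun t => latDist s t = u).card : ℝ) ≤
      (2 * u + 1 : ℝ) ^ N - (2 * u - 1 : ℝ) ^ N := by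
    have : (2 * u - 1 : ℝ) = ((2 * (u - 1) + 1 : ℕ) : ℝ) := by
      push_cast [Nat.cast_sub hu]; ring
    rw [this]
    calc _ ≤ (((2 * u + 1) ^ N - (2 * (u - 1) + 1) ^ N : ℕ) : ℝ) := by exact_mod_cast h2
      _ = _ := by rw [Nat.cast_sub h3]; push_cast; ring
  have hu' : (1 : ℝ) ≤ u := by exact_mod_cast hu
  have h5 := abs_pow_sub_pow_le (2 * u + 1 : ℝ) (2 * u - 1) N
  have h6 : max |(2 * u + 1 : ℝ)| |(2 * u - 1 : ℝ)| ≤ 3 * u :=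
    max_le (by rw [abs_of_nonneg (by linarith)]; linarith)
      (by rw [abs_of_nonneg (by linarith)]; linarith)
  calc _ ≤ _ := h4
    _ ≤ _ := (le_abs_self _).trans h5
    _ ≤ |(2 * u + 1 : ℝ) - (2 * u - 1)| * N * (3 * u) ^ (N - 1) := by gcongr
    _ = _ := by
      rw [show (2 * u + 1 : ℝ) - (2 * u - 1) = 2 by ring, abs_two, mul_pow]; ring

theorem sum_comp_latDist_le {N : ℕ} (s : Fin N → ℤ) (G : Finset (Fin N → ℤ)) {p : ℕ}
    (hs : s ∉ G) (hG : ∀ t ∈ G, latDist s t ≤ p) {f : ℕ → ℝ} (hf : ∀ u, 0 ≤ f u) :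
    ∑ t ∈ G, f (latDist s t) ≤
      2 * N * 3 ^ (N - 1) * ∑ u ∈ Finset.Icc 1 p, (u : ℝ) ^ (N - 1) * f u := by
  rw [← Finset.sum_fiberwise_of_maps_to (g := latDist s) (t := Finset.Icc 1 p) (fun t ht => by
    rw [Finset.mem_Icc]
    refine ⟨Nat.one_le_iff_ne_zero.mpr fun h => hs ?_, hG t ht⟩
    rwa [latDist_eq_zero.mp h]), Finset.mul_sum]
  refine Finset.sum_le_sum fun u hu => ?_
  rw [Finset.sum_congr rfl (g := fun _ => f u) (fun t ht => by rw [(Finset.mem_filter.mp ht).2]),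
    Finset.sum_const, nsmul_eq_mul, ← mul_assoc]
  exact mul_le_mul_of_nonneg_right
    (card_filter_latDist_eq_le s G (Finset.mem_Icc.mp hu).1) (hf u)

section Moments

variable {Ω : Type*} [m0 : MeasurableSpace Ω] {P : Measure Ω} [IsProbabilityMeasure P]

theorem integral_exp_mul_mem_Icc {X : Ω → ℝ} (hX : Measurable X) {θ : ℝ}
    (hθ : ∀ ω, |θ * X ω| ≤ 1) (hint : Integrable X P) (hint2 : Integrable (fun ω => X ω ^ 2) P)
    (h0 : ∫ ω, X ω ∂P = 0) :
    ∫ ω, Real.exp (θ * X ω) ∂P ∈ Set.Icc 1 (Real.exp (θ ^ 2 * ∫ ω, X ω ^ 2 ∂P)) := by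
  have hexp : Integrable (fun ω => Real.exp (θ * X ω)) P :=
    Integrable.of_bound (by fun_prop) (Real.exp 1) (Eventually.of_forall fun ω => by
      rw [Real.norm_of_nonneg (Real.exp_pos _).le]
      exact Real.exp_le_exp.mpr ((le_abs_self _).trans (hθ ω)))
  have hlin_int : Integrable (fun ω => 1 + θ * X ω) P :=
    (integrable_const _).add (hint.const_mul _)
  have hlin : ∫ ω, (1 + θ * X ω) ∂P = 1 := by
    rw [integral_add (integrable_const _) (hint.const_mul _), integral_const_mul, h0]; simp
  constructor
  · rw [← hlin]
    exact integral_mono hlin_int hexp fun ω => by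
      have := Real.add_one_le_exp (θ * X ω)
      simp only; linarith
  · have h1 : ∫ ω, Real.exp (θ * X ω) ∂P ≤ ∫ ω, ((1 + θ * X ω) + θ ^ 2 * X ω ^ 2) ∂P :=
      integral_mono hexp (hlin_int.add (hint2.const_mul _))
        fun ω => by
          have := (abs_le.mp (Real.abs_exp_sub_one_sub_id_le (hθ ω))).2
          simp only; linarith [mul_pow θ (X ω) 2]
    rw [integral_add hlin_int (hint2.const_mul _), hlin,
      integral_const_mul] at h1
    linarith [Real.add_one_le_exp (θ ^ 2 * ∫ ω, X ω ^ 2 ∂P)]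

variable {N : ℕ} {Z Y : (Fin N → ℤ) → Ω → ℝ} {b : ℝ}

theorem abs_integral_mul_le_alphaMix (hZ : ∀ s, Measurable (Z s))
    (hY : ∀ s, Measurable[MeasurableSpace.comap (Z s) inferInstance] (Y s))
    (hb : ∀ s ω, |Y s ω| ≤ b) (h0 : ∀ s, ∫ ω, Y s ω ∂P = 0) (s t : Fin N → ℤ) :
    |∫ ω, Y s ω * Y t ω ∂P| ≤ 4 * b ^ 2 * alphaMix P Z (latDist s t) := by
  have hY0 : ∀ s, Measurable (Y s) := fun s => (hY s).mono (hZ s).comap_le le_rfl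
  have hint : ∀ s, Integrable (Y s) P := fun s =>
    Integrable.of_bound (hY0 s).aestronglyMeasurable b (Eventually.of_forall (hb s))
  obtain ⟨ω₀⟩ := P.nonempty_of_neZero
  have hb0 : 0 ≤ b := (abs_nonneg _).trans (hb s ω₀)
  have hYY : Integrable (fun ω => Y s ω * Y t ω) P :=
    (hint t).bdd_mul (hY0 s).aestronglyMeasurable (Eventually.of_forall (hb s))
  have := abs_integral_mul_sub_le_of_mixing (fieldSigma_le hZ {s}) (fieldSigma_le hZ {t}) P
    (α := alphaMix P Z (latDist s t)) (a := 2 * b) (b := 2 * b) (by positivity) (by positivity)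
    (fun A B hA hB => le_alphaMix (by rintro _ rfl _ rfl; rfl) hA hB)
    (X := fun ω => Y s ω + b) (Y := fun ω => Y t ω + b)
    (((hY s).mono (comap_le_fieldSigma (Set.mem_singleton _)) le_rfl).add_const b)
    (((hY t).mono (comap_le_fieldSigma (Set.mem_singleton _)) le_rfl).add_const b)
    (fun ω => by linarith [(abs_le.mp (hb s ω)).1])
    (fun ω => by linarith [(abs_le.mp (hb s ω)).2])
    (fun ω => by linarith [(abs_le.mp (hb t ω)).1])
    (fun ω => by linarith [(abs_le.mp (hb t ω)).2])
  have e1 : ∀ s, ∫ ω, (Y s ω + b) ∂P = b := fun s => by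
    rw [integral_add (hint s) (integrable_const _), h0]; simp
  have e2 : ∫ ω, (Y s ω + b) * (Y t ω + b) ∂P = ∫ ω, Y s ω * Y t ω ∂P + b * b := by
    have : (fun ω => (Y s ω + b) * (Y t ω + b)) =
        fun ω => Y s ω * Y t ω + (b * (Y s ω) + b * (Y t ω + b)) := by funext ω; ring
    have h1 : Integrable (fun ω => b * Y s ω) P := (hint s).const_mul b
    have h2 : Integrable (fun ω => b * (Y t ω + b)) P :=
      ((hint t).add (integrable_const b)).const_mul b
    have h3 : Integrable (fun ω => b * Y s ω + b * (Y t ω + b)) P := h1.add h2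
    rw [this, integral_add hYY h3, integral_add h1 h2, integral_const_mul, integral_const_mul,
      e1, h0]
    ring
  rw [e1, e1, e2, add_sub_cancel_right] at this
  linarith

/-- Variance bound for the sum of a bounded centred mixing field over a set of small diameter. -/
theorem integral_sum_sq_le (hZ : ∀ s, Measurable (Z s))
    (hY : ∀ s, Measurable[MeasurableSpace.comap (Z s) inferInstance] (Y s))
    (hb : ∀ s ω, |Y s ω| ≤ b) (h0 : ∀ s, ∫ ω, Y s ω ∂P = 0) {σ2 : ℝ}
    (hσ : ∀ s, ∫ ω, Y s ω ^ 2 ∂P ≤ σ2) (G : Finset (Fin N → ℤ)) {p : ℕ}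
    (hG : ∀ s ∈ G, ∀ t ∈ G, latDist s t ≤ p) :
    ∫ ω, (∑ s ∈ G, Y s ω) ^ 2 ∂P ≤
      G.card * (σ2 + 4 * b ^ 2 * (2 * N * 3 ^ (N - 1) * abar P Z p)) := by
  classical
  have hY0 : ∀ s, Measurable (Y s) := fun s => (hY s).mono (hZ s).comap_le le_rfl
  have hYY : ∀ s t, Integrable (fun ω => Y s ω * Y t ω) P := fun s t =>
    (Integrable.of_bound (hY0 t).aestronglyMeasurable b (Eventually.of_forall (hb t))).bdd_mul
      (hY0 s).aestronglyMeasurable (Eventually.of_forall (hb s))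
  have e : ∫ ω, (∑ s ∈ G, Y s ω) ^ 2 ∂P = ∑ s ∈ G, ∑ t ∈ G, ∫ ω, Y s ω * Y t ω ∂P := by
    simp only [sq, Finset.sum_mul_sum]
    rw [integral_finsetSum _ fun s _ => integrable_finsetSum _ fun t _ => hYY s t]
    exact Finset.sum_congr rfl fun s _ => integral_finsetSum _ fun t _ => hYY s t
  rw [e, ← nsmul_eq_mul]
  refine Finset.sum_le_card_nsmul _ _ _ fun s hs => ?_
  rw [← Finset.add_sum_erase _ _ hs]
  refine add_le_add (by simpa only [sq] using hσ s) ?_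
  calc ∑ t ∈ G.erase s, ∫ ω, Y s ω * Y t ω ∂P
      ≤ ∑ t ∈ G.erase s, 4 * b ^ 2 * alphaMix P Z (latDist s t) :=
        Finset.sum_le_sum fun t _ =>
          (le_abs_self _).trans (abs_integral_mul_le_alphaMix hZ hY hb h0 s t)
    _ ≤ _ := by
        rw [← Finset.mul_sum]
        exact mul_le_mul_of_nonneg_left (sum_comp_latDist_le s _ (Finset.notMem_erase _ _)
          (fun t ht => hG s hs t (Finset.mem_of_mem_erase ht)) fun u => alphaMix_nonneg u)
          (by positivity)

end Moments

section Exponential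

variable {Ω : Type*} [m0 : MeasurableSpace Ω] {P : Measure Ω} [IsProbabilityMeasure P]
  {N : ℕ} {Z Y : (Fin N → ℤ) → Ω → ℝ} {b : ℝ}

/-- Exponential moment of a sum over well-separated blocks of small diameter. -/
theorem integral_exp_sum_blocks_le (hZ : ∀ s, Measurable (Z s))
    (hY : ∀ s, Measurable[MeasurableSpace.comap (Z s) inferInstance] (Y s))
    (hb : ∀ s ω, |Y s ω| ≤ b) (h0 : ∀ s, ∫ ω, Y s ω ∂P = 0) {σ2 : ℝ}
    (hσ : ∀ s, ∫ ω, Y s ω ^ 2 ∂P ≤ σ2) {ι : Type*} (T : Finset ι)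
    (G : ι → Finset (Fin N → ℤ)) {p q m : ℕ}
    (hsep : ∀ r ∈ T, ∀ r' ∈ T, r ≠ r' → ∀ s ∈ G r, ∀ t ∈ G r', q ≤ latDist s t)
    (hdiam : ∀ r, ∀ s ∈ G r, ∀ t ∈ G r, latDist s t ≤ p) (hcard : ∀ r, (G r).card ≤ m)
    {θ : ℝ} (hθ : 0 ≤ θ) (hc : θ * b * m ≤ 2 / 5) {x ρ D : ℝ} (_ : 0 < x)
    (hxT : x * (T.card + 1) ≤ 1) (hρ : T.card ≤ ρ) (hD : 1 ≤ D) :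
    ∫ ω, Real.exp (θ * ∑ r ∈ T, ∑ s ∈ G r, Y s ω) ∂P ≤
      Real.exp (D * ρ * alphaMix P Z q ^ x) *
        Real.exp (θ ^ 2 * ((∑ r ∈ T, (G r).card : ℕ) *
          (σ2 + 4 * b ^ 2 * (2 * N * 3 ^ (N - 1) * abar P Z p)))) := by
  have hY0 : ∀ s, Measurable (Y s) := fun s => (hY s).mono (hZ s).comap_le le_rfl
  obtain ⟨ω₀⟩ := P.nonempty_of_neZero
  have hb0 : 0 ≤ b := (abs_nonneg _).trans (hb 0 ω₀)
  set V := σ2 + 4 * b ^ 2 * (2 * N * 3 ^ (N - 1) * abar P Z p) with hV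
  have habar : 0 ≤ abar P Z p :=
    Finset.sum_nonneg fun u _ => mul_nonneg (by positivity) (alphaMix_nonneg u)
  have hσ0 : 0 ≤ σ2 := (integral_nonneg fun ω => sq_nonneg _).trans (hσ 0)
  have hV0 : 0 ≤ V := by positivity
  set α := alphaMix P Z q with hα
  have hα0 : 0 ≤ α := alphaMix_nonneg q
  have hα1 : α ≤ 1 := alphaMix_le_one q
  set a := α ^ x with ha
  have ha0 : 0 ≤ a := Real.rpow_nonneg hα0 x
  set c := θ * b * m with hcdef
  have hc0 : 0 ≤ c := by positivity
  set S : ι → Ω → ℝ := fun r ω => ∑ s ∈ G r, Y s ω with hS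
  have hSm : ∀ r, Measurable[fieldSigma Z (G r : Set _)] (S r) := fun r =>
    Finset.measurable_fun_sum _ fun s hs => (hY s).mono (comap_le_fieldSigma hs) le_rfl
  have hSm0 : ∀ r, Measurable (S r) := fun r => (hSm r).mono (fieldSigma_le hZ _) le_rfl
  have hSb : ∀ r ω, |S r ω| ≤ b * m := fun r ω => by
    calc |S r ω| ≤ ∑ s ∈ G r, |Y s ω| := Finset.abs_sum_le_sum_abs _ _
      _ ≤ (G r).card • b := Finset.sum_le_card_nsmul _ _ _ fun s _ => hb s ω
      _ = b * (G r).card := by rw [nsmul_eq_mul, mul_comm]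
      _ ≤ b * m := by gcongr; exact hcard r
  have hθS : ∀ r ω, |θ * S r ω| ≤ c := fun r ω => by
    rw [abs_mul, abs_of_nonneg hθ, hcdef, mul_assoc]
    exact mul_le_mul_of_nonneg_left (hSb r ω) hθ
  have hSint : ∀ r, Integrable (S r) P := fun r =>
    Integrable.of_bound (hSm0 r).aestronglyMeasurable _ (Eventually.of_forall (hSb r))
  have hSint2 : ∀ r, Integrable (fun ω => S r ω ^ 2) P := fun r => by
    simp only [sq]
    exact (hSint r).bdd_mul (hSm0 r).aestronglyMeasurable (Eventually.of_forall (hSb r))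
  have hS0 : ∀ r, ∫ ω, S r ω ∂P = 0 := fun r => by
    rw [hS, integral_finsetSum _ fun s _ => Integrable.of_bound (hY0 s).aestronglyMeasurable b
      (Eventually.of_forall (hb s))]
    exact Finset.sum_eq_zero fun s _ => h0 s
  have hmgf : ∀ r, ∫ ω, Real.exp (θ * S r ω) ∂P ∈
      Set.Icc 1 (Real.exp (θ ^ 2 * ((G r).card * V))) := fun r => by
    have := integral_exp_mul_mem_Icc (hSm0 r) (fun ω => (hθS r ω).trans (by linarith))
      (hSint r) (hSint2 r) (hS0 r)
    refine ⟨this.1, this.2.trans (Real.exp_le_exp.mpr ?_)⟩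
    gcongr
    exact integral_sum_sq_le hZ hY hb h0 hσ (G r) (hdiam r)
  have hexp : ∀ ω, Real.exp (θ * ∑ r ∈ T, S r ω) = ∏ r ∈ T, Real.exp (θ * S r ω) := fun ω => by
    rw [Finset.mul_sum, Real.exp_sum]
  have hle : ∀ r ω, Real.exp (θ * S r ω) ≤ Real.exp c := fun r ω =>
    Real.exp_le_exp.mpr ((le_abs_self _).trans (hθS r ω))
  change ∫ ω, Real.exp (θ * ∑ r ∈ T, S r ω) ∂P ≤ _
  simp only [hexp]
  set R := T.card with hR
  have hprod : ∏ r ∈ T, ∫ ω, Real.exp (θ * S r ω) ∂P ≤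
      Real.exp (θ ^ 2 * ((∑ r ∈ T, (G r).card : ℕ) * V)) := by
    rw [Nat.cast_sum, Finset.sum_mul, Finset.mul_sum, Real.exp_sum]
    exact Finset.prod_le_prod (fun r _ => zero_le_one.trans (hmgf r).1) fun r _ => (hmgf r).2
  have hRρ : (R : ℝ) * a ≤ D * ρ * a := by
    have : (R : ℝ) ≤ D * ρ := by nlinarith [(Nat.cast_nonneg R : (0 : ℝ) ≤ R)]
    gcongr
  rcases le_total (a * Real.exp c) 1 with hac | hac
  · have hαa : α ≤ a ^ (R + 1) := by
      rcases hα0.eq_or_lt with h | h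
      · rw [← h]; positivity
      · rw [ha, ← Real.rpow_natCast, ← Real.rpow_mul hα0]
        calc α = α ^ (1 : ℝ) := (Real.rpow_one α).symm
          _ ≤ _ := Real.rpow_le_rpow_of_exponent_ge h hα1 (by push_cast; exact hxT)
    have hαM : α * Real.exp c ^ R ≤ a := by
      calc α * Real.exp c ^ R ≤ a ^ (R + 1) * Real.exp c ^ R := by gcongr
        _ = a * (a * Real.exp c) ^ R := by ring
        _ ≤ a * 1 := by
          gcongr
          exact pow_le_one₀ (by positivity) hac
        _ = a := mul_one a
    calc _ ≤ _ := integral_prod_le_of_separated hZ (fun r => (G r : Set _))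
          (fun r ω => Real.exp (θ * S r ω)) (Real.one_le_exp hc0) T hsep
          (fun r => Real.measurable_exp.comp ((hSm r).const_mul θ))
          (fun _ _ => (Real.exp_pos _).le) hle (fun r => (hmgf r).1) le_rfl
      _ ≤ Real.exp (θ ^ 2 * ((∑ r ∈ T, (G r).card : ℕ) * V)) * Real.exp (D * ρ * a) := by
          refine mul_le_mul hprod ?_ ?_ (Real.exp_pos _).le
          · have : (R : ℝ) * α * Real.exp c ^ R ≤ R * a := by
              rw [mul_assoc]; gcongr
            linarith [Real.add_one_le_exp (D * ρ * a)]
          · positivity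
      _ = _ := mul_comm _ _
  · have ha2 : c ≤ a := by
      have h1 : Real.exp (-c) ≤ a := by
        rw [Real.exp_neg, inv_le_iff_one_le_mul₀ (Real.exp_pos c)]; exact hac
      linarith [Real.add_one_le_exp (-c)]
    have hpt : ∀ ω, ∏ r ∈ T, Real.exp (θ * S r ω) ≤ Real.exp (R * c) := fun ω => by
      rw [Real.exp_nat_mul]
      exact (Finset.prod_le_prod (fun r _ => (Real.exp_pos _).le) fun r _ => hle r ω).trans_eq
        (Finset.prod_const _)
    have hmeas : Measurable fun ω => ∏ r ∈ T, Real.exp (θ * S r ω) :=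
      Finset.measurable_fun_prod _ fun r _ => Real.measurable_exp.comp ((hSm0 r).const_mul θ)
    calc ∫ ω, ∏ r ∈ T, Real.exp (θ * S r ω) ∂P ≤ ∫ _, Real.exp (R * c) ∂P :=
          integral_mono (Integrable.of_bound hmeas.aestronglyMeasurable (Real.exp (R * c))
            (Eventually.of_forall fun ω => by
              rw [Real.norm_of_nonneg (Finset.prod_nonneg fun r _ => (Real.exp_pos _).le)]
              exact hpt ω)) (integrable_const _) hpt
      _ = Real.exp (R * c) := by simp
      _ ≤ Real.exp (D * ρ * a) := Real.exp_le_exp.mpr (hRρ.trans' (by gcongr))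
      _ ≤ _ := le_mul_of_one_le_right (Real.exp_pos _).le (Real.one_le_exp
          (mul_nonneg (sq_nonneg θ) (mul_nonneg (Nat.cast_nonneg _) hV0)))

end Exponential

section Blocks

theorem le_natAbs_sub_of_ediv_ne {x y : ℤ} {p q : ℕ} (hq : 1 ≤ q) (hqp : q ≤ p)
    (h : x % (p + q : ℤ) < p ↔ y % (p + q : ℤ) < p) (hne : x / (p + q : ℤ) ≠ y / (p + q : ℤ)) :
    q ≤ (x - y).natAbs := by
  have hd : (0 : ℤ) < p + q := by omega
  have hx := Int.mul_ediv_add_emod x (p + q)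
  have hy := Int.mul_ediv_add_emod y (p + q)
  have hx1 := Int.emod_nonneg x hd.ne'
  have hy1 := Int.emod_nonneg y hd.ne'
  have hx2 := Int.emod_lt_of_pos x hd
  have hy2 := Int.emod_lt_of_pos y hd
  rcases lt_or_gt_of_ne hne with h' | h'
  · have := mul_le_mul_of_nonneg_left (Int.add_one_le_iff.mpr h') hd.le
    rw [mul_add] at this
    omega
  · have := mul_le_mul_of_nonneg_left (Int.add_one_le_iff.mpr h') hd.le
    rw [mul_add] at this
    omega

theorem natAbs_sub_lt_of_ediv_eq {x y : ℤ} {p q : ℕ} (hq : 1 ≤ q) (hqp : q ≤ p)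
    (h : x % (p + q : ℤ) < p ↔ y % (p + q : ℤ) < p) (heq : x / (p + q : ℤ) = y / (p + q : ℤ)) :
    (x - y).natAbs < p := by
  have hd : (0 : ℤ) < p + q := by omega
  have hx := Int.mul_ediv_add_emod x (p + q)
  have hy := Int.mul_ediv_add_emod y (p + q)
  have hx1 := Int.emod_nonneg x hd.ne'
  have hy1 := Int.emod_nonneg y hd.ne'
  have hx2 := Int.emod_lt_of_pos x hd
  have hy2 := Int.emod_lt_of_pos y hd
  rw [heq] at hx
  omega

variable {N : ℕ}

theorem card_le_prod_of_natAbs_sub_lt {G : Finset (Fin N → ℤ)} {p : Fin N → ℕ}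
    (hp : ∀ i, 1 ≤ p i) (h : ∀ s ∈ G, ∀ t ∈ G, ∀ i, (s i - t i).natAbs < p i) :
    G.card ≤ ∏ i, p i := by
  have := Finset.card_le_card_of_injOn (s := G)
    (t := Fintype.piFinset fun i => Finset.Ico (0 : ℤ) (p i)) (fun s i => s i % (p i : ℤ))
    (fun s _ => by
      rw [Finset.mem_coe, Fintype.mem_piFinset]
      intro i
      have := hp i
      exact Finset.mem_Ico.mpr ⟨Int.emod_nonneg _ (by omega), Int.emod_lt_of_pos _ (by omega)⟩)
    (fun s hs t ht hst => by
      funext i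
      have h1 : (p i : ℤ) ∣ s i - t i := Int.ModEq.dvd (congrFun hst i).symm
      have := Int.eq_zero_of_abs_lt_dvd h1 (by
        rw [Int.abs_eq_natAbs]; exact_mod_cast h s hs t ht i)
      omega)
  simpa using this

/-- Residue type of a lattice point: in each coordinate, whether it lies in the first (length `p`)
or the second (length `q`) part of its period. -/
def blockType (p q : Fin N → ℕ) (s : Fin N → ℤ) : Fin N → Bool :=
  fun i => decide ((s i - 1) % (p i + q i : ℤ) < p i)

/-- Index of the period box containing a lattice point. -/
def blockIdx (p q : Fin N → ℕ) (s : Fin N → ℤ) : Fin N → ℤ :=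
  fun i => (s i - 1) / (p i + q i : ℤ)

/-- The points of the observation window of given type and period box. -/
def block (n p q : Fin N → ℕ) (δ : Fin N → Bool) (r : Fin N → ℤ) : Finset (Fin N → ℤ) :=
  ((obsIdx n).filter fun s => blockType p q s = δ).filter fun s => blockIdx p q s = r

/-- The period boxes that meet the observation window. -/
def blockRange (n p q : Fin N → ℕ) : Finset (Fin N → ℤ) :=
  Fintype.piFinset fun i => Finset.Icc 0 ((n i : ℤ) / (p i + q i))

theorem mem_block {n p q : Fin N → ℕ} {δ : Fin N → Bool} {r s : Fin N → ℤ} :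
    s ∈ block n p q δ r ↔ s ∈ obsIdx n ∧ blockType p q s = δ ∧ blockIdx p q s = r := by
  simp [block, and_assoc]

theorem blockIdx_mem_blockRange {n p q : Fin N → ℕ} {s : Fin N → ℤ}
    (hq : ∀ i, 1 ≤ q i) (hs : s ∈ obsIdx n) :
    blockIdx p q s ∈ blockRange n p q := by
  rw [obsIdx, Finset.mem_Icc] at hs
  rw [blockRange, Fintype.mem_piFinset]
  intro i
  have h0 := hq i
  have h1 : 1 ≤ s i := hs.1 i
  have h2 : s i ≤ n i := hs.2 i
  rw [Finset.mem_Icc]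
  exact ⟨Int.ediv_nonneg (by omega) (by omega), Int.ediv_le_ediv (by omega) (by omega)⟩

theorem sum_obsIdx_eq {M : Type*} [AddCommMonoid M] {n p q : Fin N → ℕ}
    (hq : ∀ i, 1 ≤ q i) (f : (Fin N → ℤ) → M) :
    ∑ s ∈ obsIdx n, f s =
      ∑ δ : Fin N → Bool, ∑ r ∈ blockRange n p q, ∑ s ∈ block n p q δ r, f s := by
  rw [← Finset.sum_fiberwise (obsIdx n) (blockType p q)]
  refine Finset.sum_congr rfl fun δ _ => ?_
  rw [← Finset.sum_fiberwise_of_maps_to (g := blockIdx p q) (t := blockRange n p q)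
    (fun s hs => blockIdx_mem_blockRange hq (Finset.mem_filter.mp hs).1)]
  rfl

variable {n p q : Fin N → ℕ} {δ : Fin N → Bool} {r r' s t : Fin N → ℤ}

theorem blockType_apply_iff (hs : blockType p q s = δ) (ht : blockType p q t = δ) (i : Fin N) :
    (s i - 1) % (p i + q i : ℤ) < p i ↔ (t i - 1) % (p i + q i : ℤ) < p i := by
  have := congrFun (hs.trans ht.symm) i
  simpa [blockType] using this

theorem exists_le_natAbs_sub_of_mem_block (hq : ∀ i, 1 ≤ q i) (hqp : ∀ i, q i ≤ p i)
    (hrr : r ≠ r') (hs : s ∈ block n p q δ r)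
    (ht : t ∈ block n p q δ r') : ∃ i, q i ≤ (s i - t i).natAbs := by
  rw [mem_block] at hs ht
  obtain ⟨-, hs1, rfl⟩ := hs
  obtain ⟨-, ht1, rfl⟩ := ht
  obtain ⟨i, hi⟩ := Function.ne_iff.mp hrr
  have := le_natAbs_sub_of_ediv_ne (hq i) (hqp i) (blockType_apply_iff hs1 ht1 i) hi
  exact ⟨i, by simpa using this⟩

theorem natAbs_sub_lt_of_mem_block (hq : ∀ i, 1 ≤ q i) (hqp : ∀ i, q i ≤ p i)
    (hs : s ∈ block n p q δ r) (ht : t ∈ block n p q δ r)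
    (i : Fin N) : (s i - t i).natAbs < p i := by
  rw [mem_block] at hs ht
  have := natAbs_sub_lt_of_ediv_eq (hq i) (hqp i) (blockType_apply_iff hs.2.1 ht.2.1 i)
    (congrFun (hs.2.2.trans ht.2.2.symm) i)
  simpa using this

end Blocks

section Window

variable {N : ℕ} {n p q : Fin N → ℕ}

theorem card_obsIdx (n : Fin N → ℕ) : (obsIdx n).card = ∏ i, n i := by
  rw [obsIdx, Pi.card_Icc]
  simp

theorem card_blockRange_mul_le (hpq : ∀ i, q i + p i < n i) :
    (blockRange n p q).card * ∏ i, p i ≤ 2 ^ N * ∏ i, n i := by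
  have h2 : (2 : ℕ) ^ N = ∏ _i : Fin N, 2 := by simp
  rw [blockRange, Fintype.card_piFinset, h2, ← Finset.prod_mul_distrib, ← Finset.prod_mul_distrib]
  refine Finset.prod_le_prod' fun i _ => ?_
  have h := hpq i
  rw [Int.card_Icc]
  have e : ((n i : ℤ) / (p i + q i) + 1 - 0).toNat = n i / (p i + q i) + 1 := by
    rw [show ((n i : ℤ) / (p i + q i) + 1 - 0) = ((n i / (p i + q i) + 1 : ℕ) : ℤ) by
      push_cast; ring, Int.toNat_natCast]
  rw [e, add_mul]
  have := Nat.div_mul_le_self (n i) (p i + q i)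
  rw [mul_add] at this
  have h' : 0 ≤ n i / (p i + q i) * q i := Nat.zero_le _
  omega

variable {Ω : Type*} [m0 : MeasurableSpace Ω] {P : Measure Ω} [IsProbabilityMeasure P]
  {Z Y : (Fin N → ℤ) → Ω → ℝ} {b : ℝ}

/-- Exponential moment of the sum of a bounded centred mixing field over the window. -/
theorem integral_exp_sum_obsIdx_le (hZ : ∀ s, Measurable (Z s))
    (hY : ∀ s, Measurable[MeasurableSpace.comap (Z s) inferInstance] (Y s))
    (hb : ∀ s ω, |Y s ω| ≤ b) (h0 : ∀ s, ∫ ω, Y s ω ∂P = 0) {σ2 : ℝ}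
    (hσ : ∀ s, ∫ ω, Y s ω ^ 2 ∂P ≤ σ2) (hq : ∀ i, 1 ≤ q i) (hqp : ∀ i, q i ≤ p i)
    (hpq : ∀ i, q i + p i < n i) {pmax qmin : ℕ} (hpmax : ∀ i, p i ≤ pmax)
    (hqmin : ∀ i, qmin ≤ q i) {lam D : ℝ} (hlam : 0 ≤ lam)
    (hc : 2 ^ N * lam * b * ∏ i, (p i : ℝ) ≤ 2 / 5) (hD : 1 ≤ D) :
    ∫ ω, Real.exp (lam * ∑ s ∈ obsIdx n, Y s ω) ∂P ≤
      Real.exp (D * (2 ^ N * ((∏ i, (n i : ℝ)) / ∏ i, (p i : ℝ))) * alphaMix P Z qmin ^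
        ((∏ i, (p i : ℝ)) / ((∏ i, (n i : ℝ)) * (2 ^ N + 1)))) *
      Real.exp ((2 ^ N * lam) ^ 2 * ((∏ i, (n i : ℝ)) *
          (σ2 + 4 * b ^ 2 * (2 * N * 3 ^ (N - 1) * abar P Z pmax)))) := by
  have hY0 : ∀ s, Measurable (Y s) := fun s => (hY s).mono (hZ s).comap_le le_rfl
  obtain ⟨ω₀⟩ := P.nonempty_of_neZero
  have hb0 : 0 ≤ b := (abs_nonneg _).trans (hb 0 ω₀)
  set V := σ2 + 4 * b ^ 2 * (2 * N * 3 ^ (N - 1) * abar P Z pmax) with hV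
  have habar : 0 ≤ abar P Z pmax :=
    Finset.sum_nonneg fun u _ => mul_nonneg (by positivity) (alphaMix_nonneg u)
  have hσ0 : 0 ≤ σ2 := (integral_nonneg fun ω => sq_nonneg _).trans (hσ 0)
  have hV0 : 0 ≤ V := by positivity
  have hp0 : ∀ i, 1 ≤ p i := fun i => (hq i).trans (hqp i)
  have hPpos : 0 < ∏ i, (p i : ℝ) := Finset.prod_pos fun i _ => by exact_mod_cast hp0 i
  have hPn : ∏ i, (p i : ℝ) ≤ ∏ i, (n i : ℝ) :=
    Finset.prod_le_prod (fun i _ => by positivity) fun i _ => by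
      exact_mod_cast (by have := hpq i; omega : p i ≤ n i)
  have hnpos := hPpos.trans_le hPn
  have hcardT : ((blockRange n p q).card : ℝ) * ∏ i, (p i : ℝ) ≤ 2 ^ N * ∏ i, (n i : ℝ) := by
    exact_mod_cast card_blockRange_mul_le hpq
  set T := blockRange n p q with hT
  set pp := ∏ i, (p i : ℝ)
  set nn := ∏ i, (n i : ℝ)
  set E := Real.exp (D * (2 ^ N * (nn / pp)) * alphaMix P Z qmin ^ (pp / (nn * (2 ^ N + 1)))) *
      Real.exp ((2 ^ N * lam) ^ 2 * (nn * V)) with hE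
  set U : (Fin N → Bool) → Ω → ℝ := fun δ ω => ∑ r ∈ T, ∑ s ∈ block n p q δ r, Y s ω with hU
  have hUE : ∀ δ, ∫ ω, Real.exp (2 ^ N * lam * U δ ω) ∂P ≤ E := by
    intro δ
    have key := integral_exp_sum_blocks_le hZ hY hb h0 hσ T (block n p q δ) (p := pmax)
      (q := qmin) (m := ∏ i, p i)
      (fun r _ r' _ hrr s hs t ht => by
        obtain ⟨i, hi⟩ := exists_le_natAbs_sub_of_mem_block hq hqp hrr hs ht
        exact ((hqmin i).trans hi).trans (natAbs_sub_le_latDist s t i))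
      (fun r s hs t ht => latDist_le_iff.mpr fun i =>
        (natAbs_sub_lt_of_mem_block hq hqp hs ht i).le.trans (hpmax i))
      (fun r => card_le_prod_of_natAbs_sub_lt hp0 fun s hs t ht i =>
        natAbs_sub_lt_of_mem_block hq hqp hs ht i)
      (θ := 2 ^ N * lam) (by positivity) (by push_cast; exact hc)
      (x := pp / (nn * (2 ^ N + 1))) (ρ := 2 ^ N * (nn / pp)) (by positivity)
      (by
        rw [div_mul_eq_mul_div, div_le_one (by positivity)]
        nlinarith)
      (by rw [mul_div_assoc', le_div_iff₀ hPpos]; exact hcardT) hD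
    refine key.trans ?_
    rw [hE]
    have hsum : ((∑ r ∈ T, (block n p q δ r).card : ℕ) : ℝ) ≤ nn := by
      have h1 : ∑ r ∈ T, (block n p q δ r).card ≤ ∑ δ, ∑ r ∈ T, (block n p q δ r).card :=
        Finset.single_le_sum (f := fun δ => ∑ r ∈ T, (block n p q δ r).card)
          (fun _ _ => Nat.zero_le _) (Finset.mem_univ δ)
      have h2 := sum_obsIdx_eq (n := n) (p := p) hq fun _ => 1
      simp only [Finset.sum_const, smul_eq_mul, mul_one] at h2
      rw [← h2, card_obsIdx] at h1
      calc _ ≤ ((∏ i, n i : ℕ) : ℝ) := Nat.cast_le.mpr h1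
        _ = nn := Nat.cast_prod _ _
    gcongr
  have hUm : ∀ δ, Measurable (U δ) := fun δ =>
    Finset.measurable_fun_sum _ fun r _ => Finset.measurable_fun_sum _ fun s _ => hY0 s
  have hUint : ∀ δ, Integrable (fun ω => Real.exp (2 ^ N * lam * U δ ω)) P := fun δ => by
    refine Integrable.of_bound (Real.measurable_exp.comp
      ((hUm δ).const_mul _)).aestronglyMeasurable
      (Real.exp (2 ^ N * lam * ∑ r ∈ T, ∑ s ∈ block n p q δ r, b))
      (Eventually.of_forall fun ω => ?_)
    rw [Real.norm_of_nonneg (Real.exp_pos _).le, hU]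
    refine Real.exp_le_exp.mpr (mul_le_mul_of_nonneg_left ?_ (by positivity))
    exact Finset.sum_le_sum fun r _ => Finset.sum_le_sum fun s _ =>
      (le_abs_self _).trans (hb s ω)
  have hjensen : ∀ ω, Real.exp (lam * ∑ s ∈ obsIdx n, Y s ω) ≤
      ∑ δ : Fin N → Bool, (1 / 2 ^ N : ℝ) * Real.exp (2 ^ N * lam * U δ ω) := fun ω => by
    have := convexOn_exp.map_sum_le (t := (Finset.univ : Finset (Fin N → Bool)))
      (w := fun _ => (1 / 2 ^ N : ℝ)) (p := fun δ => 2 ^ N * lam * U δ ω)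
      (fun _ _ => by positivity) (by simp) (fun _ _ => Set.mem_univ _)
    simp only [smul_eq_mul] at this
    refine le_trans (le_of_eq ?_) this
    rw [sum_obsIdx_eq (p := p) hq, Finset.mul_sum]
    congr 1
    refine Finset.sum_congr rfl fun δ _ => ?_
    simp only [hU, hT]
    field_simp
  calc ∫ ω, Real.exp (lam * ∑ s ∈ obsIdx n, Y s ω) ∂P
      ≤ ∫ ω, ∑ δ : Fin N → Bool, (1 / 2 ^ N : ℝ) * Real.exp (2 ^ N * lam * U δ ω) ∂P :=
        integral_mono_of_nonneg (Eventually.of_forall fun ω => (Real.exp_pos _).le)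
          (integrable_finsetSum _ fun δ _ => (hUint δ).const_mul _) (Eventually.of_forall hjensen)
    _ = ∑ δ : Fin N → Bool, (1 / 2 ^ N : ℝ) * ∫ ω, Real.exp (2 ^ N * lam * U δ ω) ∂P := by
        rw [integral_finsetSum _ fun δ _ => (hUint δ).const_mul _]
        simp only [integral_const_mul]
    _ ≤ ∑ δ : Fin N → Bool, (1 / 2 ^ N : ℝ) * E :=
        Finset.sum_le_sum fun δ _ => mul_le_mul_of_nonneg_left (hUE δ) (by positivity)
    _ = E := by simp

/-- Two-sided Chernoff bound for the sum of a bounded centred mixing field over the window. -/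
theorem measureReal_abs_sum_obsIdx_ge_le (hZ : ∀ s, Measurable (Z s))
    (hY : ∀ s, Measurable[MeasurableSpace.comap (Z s) inferInstance] (Y s))
    (hb : ∀ s ω, |Y s ω| ≤ b) (h0 : ∀ s, ∫ ω, Y s ω ∂P = 0) {σ2 : ℝ}
    (hσ : ∀ s, ∫ ω, Y s ω ^ 2 ∂P ≤ σ2) (hq : ∀ i, 1 ≤ q i) (hqp : ∀ i, q i ≤ p i)
    (hpq : ∀ i, q i + p i < n i) {pmax qmin : ℕ} (hpmax : ∀ i, p i ≤ pmax)
    (hqmin : ∀ i, qmin ≤ q i) {lam D : ℝ} (hlam : 0 ≤ lam)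
    (hc : 2 ^ N * lam * b * ∏ i, (p i : ℝ) ≤ 2 / 5) (hD : 1 ≤ D) (η : ℝ) :
    P.real {ω | η ≤ |∑ s ∈ obsIdx n, Y s ω|} ≤ 2 * (Real.exp (-lam * η) *
      (Real.exp (D * (2 ^ N * ((∏ i, (n i : ℝ)) / ∏ i, (p i : ℝ))) * alphaMix P Z qmin ^
        ((∏ i, (p i : ℝ)) / ((∏ i, (n i : ℝ)) * (2 ^ N + 1)))) *
      Real.exp ((2 ^ N * lam) ^ 2 * ((∏ i, (n i : ℝ)) *
          (σ2 + 4 * b ^ 2 * (2 * N * 3 ^ (N - 1) * abar P Z pmax)))))) := by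
  have one_sided : ∀ X : (Fin N → ℤ) → Ω → ℝ,
      (∀ s, Measurable[MeasurableSpace.comap (Z s) inferInstance] (X s)) →
      (∀ s ω, |X s ω| ≤ b) → (∀ s, ∫ ω, X s ω ∂P = 0) → (∀ s, ∫ ω, X s ω ^ 2 ∂P ≤ σ2) →
      P.real {ω | η ≤ ∑ s ∈ obsIdx n, X s ω} ≤ Real.exp (-lam * η) *
        (Real.exp (D * (2 ^ N * ((∏ i, (n i : ℝ)) / ∏ i, (p i : ℝ))) * alphaMix P Z qmin ^
          ((∏ i, (p i : ℝ)) / ((∏ i, (n i : ℝ)) * (2 ^ N + 1)))) *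
        Real.exp ((2 ^ N * lam) ^ 2 * ((∏ i, (n i : ℝ)) *
          (σ2 + 4 * b ^ 2 * (2 * N * 3 ^ (N - 1) * abar P Z pmax))))) := by
    intro X hX hXb hX0 hXσ
    have hm : Measurable fun ω => ∑ s ∈ obsIdx n, X s ω :=
      Finset.measurable_fun_sum _ fun s _ => (hX s).mono (hZ s).comap_le le_rfl
    have hint : Integrable (fun ω => Real.exp (lam * ∑ s ∈ obsIdx n, X s ω)) P := by
      refine Integrable.of_bound (Real.measurable_exp.comp (hm.const_mul _)).aestronglyMeasurable
        (Real.exp (lam * ∑ s ∈ obsIdx n, b)) (Eventually.of_forall fun ω => ?_)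
      rw [Real.norm_of_nonneg (Real.exp_pos _).le]
      gcongr with s _
      exact (le_abs_self _).trans (hXb s ω)
    refine (ProbabilityTheory.measure_ge_le_exp_mul_mgf η hlam hint).trans ?_
    gcongr
    exact integral_exp_sum_obsIdx_le hZ hX hXb hX0 hXσ hq hqp hpq hpmax hqmin hlam hc hD
  have hneg := one_sided (fun s ω => -Y s ω) (fun s => (hY s).neg)
    (fun s ω => by rw [abs_neg]; exact hb s ω) (fun s => by rw [integral_neg, h0, neg_zero])
    (fun s => by simpa only [neg_sq] using hσ s)
  have hpos := one_sided Y hY hb h0 hσ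
  have hsub : {ω | η ≤ |∑ s ∈ obsIdx n, Y s ω|} ⊆
      {ω | η ≤ ∑ s ∈ obsIdx n, Y s ω} ∪ {ω | η ≤ ∑ s ∈ obsIdx n, -Y s ω} := fun ω hω => by
    simpa only [Set.mem_union, Set.mem_ofPred_eq, Finset.sum_neg_distrib] using le_abs.mp hω
  have := (measureReal_mono (μ := P) hsub).trans (measureReal_union_le _ _)
  linarith

end Window

section Tail

theorem integrableOn_exp_neg_mul_rpow {κ p : ℝ} (hκ : 0 < κ) (hp : 0 < p) :
    IntegrableOn (fun x : ℝ => Real.exp (-κ * x ^ p)) (Set.Ioi 0) := by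
  have h := integral_rpow_mul_exp_neg_mul_rpow hp (q := 0) (by norm_num) hκ
  have hΓ : 0 < Real.Gamma ((0 + 1) / p) := Real.Gamma_pos_of_pos (by positivity)
  simp only [Real.rpow_zero, one_mul] at h
  exact Integrable.of_integral_ne_zero (by rw [h]; positivity)

theorem integral_Ioi_exp_neg_mul_rpow {κ p B : ℝ} (hκ : 0 < κ) (hp : 0 < p) (hB : 0 < B) :
    ∫ x in Set.Ioi B, Real.exp (-κ * x ^ p) =
      1 / p * κ ^ (-(1 : ℝ) / p) * uGamma (1 / p) (κ * B ^ p) := by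
  set g : ℝ → ℝ := fun t => t ^ (1 / p - 1) * Real.exp (-t) with hg
  have e1 : uGamma (1 / p) (κ * B ^ p) = κ * ∫ u in Set.Ioi (B ^ p), g (κ * u) :=
    (integral_comp_mul_left_Ioi' g (B ^ p) hκ).symm
  have e2 : ∫ u in Set.Ioi (B ^ p), g (κ * u) =
      ∫ x in Set.Ioi B, p * x ^ (p - 1) * g (κ * x ^ p) := by
    have h := integral_comp_rpow_Ioi
      ((Set.Ioi (B ^ p)).indicator fun u => g (κ * u)) hp.ne'
    rw [setIntegral_indicator measurableSet_Ioi, Set.Ioi_inter_Ioi,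
      max_eq_right (Real.rpow_nonneg hB.le p)] at h
    rw [← h, ← integral_indicator measurableSet_Ioi, ← integral_indicator measurableSet_Ioi]
    congr 1
    funext x
    by_cases hx : B < x
    · have hx0 : 0 < x := hB.trans hx
      have hxp : B ^ p < x ^ p := Real.rpow_lt_rpow hB.le hx hp
      rw [Set.indicator_of_mem (Set.mem_Ioi.mpr hx), Set.indicator_of_mem (Set.mem_Ioi.mpr hx0),
        Set.indicator_of_mem (Set.mem_Ioi.mpr hxp), abs_of_pos hp, smul_eq_mul]
    · rw [Set.indicator_of_notMem (s := Set.Ioi B) hx]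
      by_cases hx0 : 0 < x
      · have hxp : x ^ p ∉ Set.Ioi (B ^ p) :=
          not_lt.mpr (Real.rpow_le_rpow hx0.le (not_lt.mp hx) hp.le)
        rw [Set.indicator_of_mem (Set.mem_Ioi.mpr hx0), Set.indicator_of_notMem hxp, smul_zero]
      · rw [Set.indicator_of_notMem (s := Set.Ioi (0 : ℝ)) hx0]
  have e3 : ∫ x in Set.Ioi B, p * x ^ (p - 1) * g (κ * x ^ p) =
      p * κ ^ (1 / p - 1) * ∫ x in Set.Ioi B, Real.exp (-κ * x ^ p) := by
    rw [← integral_const_mul]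
    refine setIntegral_congr_fun measurableSet_Ioi fun x hx => ?_
    have hx0 : 0 < x := hB.trans hx
    have h1 : x ^ (p - 1) * x ^ (p * (1 / p - 1)) = 1 := by
      rw [← Real.rpow_add hx0]
      convert Real.rpow_zero x using 2
      field_simp; ring
    simp only [hg]
    rw [Real.mul_rpow hκ.le (by positivity), ← Real.rpow_mul hx0.le, neg_mul]
    linear_combination p * κ ^ (1 / p - 1) * Real.exp (-(κ * x ^ p)) * h1
  have h2 : κ ^ (-(1 : ℝ) / p) * κ * κ ^ (1 / p - 1) = 1 := by
    rw [← Real.rpow_add_one hκ.ne', ← Real.rpow_add hκ]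
    convert Real.rpow_zero κ using 2
    ring
  rw [e1, e2, e3]
  have h3 : 1 / p * p = 1 := by field_simp
  linear_combination -(∫ x in Set.Ioi B, Real.exp (-κ * x ^ p)) * h2 -
    (∫ x in Set.Ioi B, Real.exp (-κ * x ^ p)) * (κ ^ (-(1 : ℝ) / p) * κ * κ ^ (1 / p - 1)) * h3

/-- Truncation of a real number to `[-B, B]`. -/
def clip (B x : ℝ) : ℝ := max (-B) (min x B)

theorem measurable_clip (B : ℝ) : Measurable (clip B) := by
  unfold clip; fun_prop

theorem abs_clip_le {B : ℝ} (hB : 0 ≤ B) (x : ℝ) : |clip B x| ≤ B :=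
  abs_le.mpr ⟨le_max_left _ _, max_le (by linarith) (min_le_right _ _)⟩

theorem clip_sq_le {B : ℝ} (hB : 0 ≤ B) (x : ℝ) : clip B x ^ 2 ≤ x ^ 2 := by
  rw [sq_le_sq, clip]
  rcases abs_cases x with ⟨h, _⟩ | ⟨h, _⟩ <;> rw [h] <;>
    rcases max_cases (-B) (min x B) with ⟨h1, _⟩ | ⟨h1, _⟩ <;> rw [h1, abs_le] <;>
    rcases min_cases x B with ⟨h2, _⟩ | ⟨h2, _⟩ <;> constructor <;> linarith

theorem abs_sub_clip {B : ℝ} (hB : 0 ≤ B) (x : ℝ) : |x - clip B x| = max (|x| - B) 0 := by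
  rcases le_or_gt x (-B) with h1 | h1
  · rw [clip, min_eq_left (by linarith), max_eq_left h1, abs_of_nonpos (by linarith),
      abs_of_nonpos (by linarith), max_eq_left (by linarith)]
    ring
  rcases le_or_gt x B with h2 | h2
  · rw [clip, min_eq_left h2, max_eq_right h1.le, sub_self, abs_zero,
      max_eq_right (sub_nonpos.mpr (abs_le.mpr ⟨h1.le, h2⟩))]
  · rw [clip, min_eq_right h2.le, max_eq_right (by linarith), abs_of_nonneg (by linarith),
      abs_of_nonneg (by linarith), max_eq_left (by linarith)]

variable {Ω : Type*} [m0 : MeasurableSpace Ω] {P : Measure Ω}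
  {X : Ω → ℝ} {κ0 κ1 τ : ℝ}

theorem integrable_sq_of_tail (hX : Measurable X) (h1 : 0 < κ1) (hτ : 0 < τ)
    (htail : ∀ z : ℝ, 0 ≤ z →
      P {ω | z < |X ω|} ≤ ENNReal.ofReal (κ0 * Real.exp (-κ1 * z ^ τ))) :
    Integrable (fun ω => X ω ^ 2) P := by
  have hint := (integrableOn_exp_neg_mul_rpow h1 (p := τ / 2) (by positivity)).const_mul κ0
  refine ⟨(hX.pow_const 2).aestronglyMeasurable, ?_⟩
  rw [hasFiniteIntegral_iff_ofReal (Eventually.of_forall fun ω => sq_nonneg _),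
    lintegral_eq_lintegral_meas_lt P (Eventually.of_forall fun ω => sq_nonneg _)
      (hX.pow_const 2).aemeasurable]
  refine lt_of_le_of_lt (setLIntegral_mono (g := fun t => ENNReal.ofReal
    (κ0 * Real.exp (-κ1 * t ^ (τ / 2)))) (by fun_prop) fun t ht => ?_) hint.lintegral_lt_top
  have ht0 : (0 : ℝ) ≤ t := le_of_lt ht
  have e : {ω | t < X ω ^ 2} = {ω | √t < |X ω|} := by
    ext ω
    rw [Set.mem_ofPred_eq, Set.mem_ofPred_eq, ← Real.sqrt_sq_eq_abs, Real.sqrt_lt_sqrt_iff ht0]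
  rw [e]
  refine (htail _ (Real.sqrt_nonneg t)).trans_eq ?_
  rw [Real.sqrt_eq_rpow, ← Real.rpow_mul ht0]
  ring_nf

theorem integral_abs_sub_clip_le (hX : Measurable X) (h0 : 0 < κ0) (h1 : 0 < κ1) (hτ : 0 < τ)
    (htail : ∀ z : ℝ, 0 ≤ z →
      P {ω | z < |X ω|} ≤ ENNReal.ofReal (κ0 * Real.exp (-κ1 * z ^ τ)))
    {B : ℝ} (hB : 0 < B) :
    ∫ ω, |X ω - clip B (X ω)| ∂P ≤
      κ0 * (1 / τ * κ1 ^ (-(1 : ℝ) / τ) * uGamma (1 / τ) (κ1 * B ^ τ)) := by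
  have hmeas : Measurable fun ω => max (|X ω| - B) 0 := by fun_prop
  have hnn : ∀ ω, 0 ≤ max (|X ω| - B) 0 := fun ω => le_max_right _ _
  have hint : IntegrableOn (fun x : ℝ => κ0 * Real.exp (-κ1 * x ^ τ)) (Set.Ioi B) :=
    IntegrableOn.mono_set (Integrable.const_mul (integrableOn_exp_neg_mul_rpow h1 hτ) κ0)
      (Set.Ioi_subset_Ioi hB.le)
  simp only [abs_sub_clip hB.le]
  rw [← integral_Ioi_exp_neg_mul_rpow h1 hτ hB, ← integral_const_mul,
    integral_eq_lintegral_of_nonneg_ae (Eventually.of_forall hnn) hmeas.aestronglyMeasurable,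
    lintegral_eq_lintegral_meas_lt P (Eventually.of_forall hnn) hmeas.aemeasurable,
    integral_eq_lintegral_of_nonneg_ae (Eventually.of_forall fun x => by positivity) hint.1]
  refine ENNReal.toReal_mono hint.lintegral_lt_top.ne ?_
  have hshift : ∫⁻ x in Set.Ioi B, ENNReal.ofReal (κ0 * Real.exp (-κ1 * x ^ τ)) =
      ∫⁻ t in Set.Ioi 0, ENNReal.ofReal (κ0 * Real.exp (-κ1 * (t + B) ^ τ)) := by
    have := (measurePreserving_add_right volume B).setLIntegral_comp_preimage
      (measurableSet_Ioi (a := B))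
      (f := fun x => ENNReal.ofReal (κ0 * Real.exp (-κ1 * x ^ τ))) (by fun_prop)
    simpa using this.symm
  rw [hshift]
  refine setLIntegral_mono (by fun_prop) fun t ht => ?_
  have ht0 : (0 : ℝ) < t := ht
  refine (measure_mono fun ω (hω : t < max (|X ω| - B) 0) => ?_).trans
    (htail (t + B) (by positivity))
  rcases lt_max_iff.mp hω with h | h
  · exact lt_sub_iff_add_lt.mp h
  · exact absurd h (not_lt.mpr ht0.le)

end Tail

/-- Extended Bernstein inequality for unbounded variables. -/
theorem bernstein_spatial_lattice_unbounded (N : ℕ) (hN : 0 < N) :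
    ∃ γc : ℝ, ∀ (Ω : Type) (_ : MeasurableSpace Ω) (P : Measure Ω),
      IsProbabilityMeasure P →
      ∀ (Z : (Fin N → ℤ) → Ω → ℝ), (∀ s, Measurable (Z s)) →
      -- strong mixing
      Tendsto (alphaMix P Z) atTop (nhds 0) →
      ∀ (σ2 κ0 κ1 τ : ℝ), 0 < κ0 → 0 < κ1 → 0 < τ →
      (∀ s, ∫ ω, Z s ω ∂P = 0) →
      (∀ s, ∫ ω, (Z s ω) ^ 2 ∂P ≤ σ2) →
      -- tail condition `P(|Z(s)| > z) ≤ κ0 exp(−κ1 z^τ)`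
      (∀ s, ∀ z : ℝ, 0 ≤ z →
        P {ω | z < |Z s ω|} ≤ ENNReal.ofReal (κ0 * Real.exp (-κ1 * z ^ τ))) →
      ∀ (n : Fin N → ℕ) (Pseq Qseq : Fin N → ℕ → ℕ),
      (∀ i, Monotone (Pseq i)) → (∀ i, Monotone (Qseq i)) →
      (∀ i, 1 ≤ Qseq i (n i) ∧ Qseq i (n i) ≤ Pseq i (n i) ∧
        Pseq i (n i) < Qseq i (n i) + Pseq i (n i) ∧ Qseq i (n i) + Pseq i (n i) < n i) →
      ∀ (B ε β : ℝ), 0 < B → 0 < ε → 0 < β →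
      2 ^ (N + 1) * B * (∏ i, (Pseq i (n i) : ℝ)) * Real.exp 1 * β < 1 →
      P {ω | ε < |∑ s ∈ obsIdx n, Z s ω|} ≤ ENNReal.ofReal
        (12 / (ε * τ) * κ0 * κ1 ^ (-(1 : ℝ) / τ) * uGamma (1 / τ) (κ1 * B ^ τ) *
            ((obsIdx n).card : ℝ) +
          2 * Real.exp (12 * Real.sqrt (Real.exp 1) * 2 ^ N *
              ((∏ i, (n i : ℝ)) / ∏ i, (Pseq i (n i) : ℝ)) *
              (alphaMix P Z (Finset.univ.inf' (Finset.univ_nonempty_iff.mpr ⟨⟨0, hN⟩⟩)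
                  fun i => Qseq i (n i))) ^
                ((∏ i, (Pseq i (n i) : ℝ)) / ((∏ i, (n i : ℝ)) * (2 ^ N + 1)))) *
            Real.exp (-β * ε / 3) *
            Real.exp (2 ^ (3 * N) * β ^ 2 * Real.exp 1 *
              (σ2 + 48 * B ^ 2 * γc *
                abar P Z (Finset.univ.sup' (Finset.univ_nonempty_iff.mpr ⟨⟨0, hN⟩⟩)
                  fun i => Pseq i (n i))) *
              ∏ i, (n i : ℝ))) := by
  refine ⟨2 * N * 3 ^ (N - 1), ?_⟩
  intro Ω _ P hP Z hZ _ σ2 κ0 κ1 τ h0 h1 hτ hmean hvar htail n Pseq Qseq _ _ hPQ B ε β hB hε hβ hβc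
  set p : Fin N → ℕ := fun i => Pseq i (n i) with hp
  set q : Fin N → ℕ := fun i => Qseq i (n i) with hq
  set hne : (Finset.univ : Finset (Fin N)).Nonempty := Finset.univ_nonempty_iff.mpr ⟨⟨0, hN⟩⟩
  set qmin := Finset.univ.inf' hne q with hqmin
  set pmax := Finset.univ.sup' hne p with hpmax
  set m : (Fin N → ℤ) → ℝ := fun s => ∫ ω, clip B (Z s ω) ∂P with hm
  set Y : (Fin N → ℤ) → Ω → ℝ := fun s ω => clip B (Z s ω) - m s with hY
  set L := κ0 * (1 / τ * κ1 ^ (-(1 : ℝ) / τ) * uGamma (1 / τ) (κ1 * B ^ τ)) with hL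
  have hclipm : ∀ s, Measurable fun ω => clip B (Z s ω) := fun s =>
    (measurable_clip B).comp (hZ s)
  have hclipi : ∀ s, Integrable (fun ω => clip B (Z s ω)) P := fun s =>
    Integrable.of_bound (hclipm s).aestronglyMeasurable B
      (Eventually.of_forall fun ω => abs_clip_le hB.le _)
  have hmB : ∀ s, |m s| ≤ B := fun s => by
    have := norm_integral_le_of_norm_le_const (μ := P) (f := fun ω => clip B (Z s ω)) (C := B)
      (Eventually.of_forall fun ω => abs_clip_le hB.le _)
    simpa using this
  have hZ2 : ∀ s, Integrable (fun ω => Z s ω ^ 2) P := fun s =>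
    integrable_sq_of_tail (hZ s) h1 hτ (htail s)
  have hZi : ∀ s, Integrable (Z s) P := fun s =>
    ((memLp_two_iff_integrable_sq (hZ s).aestronglyMeasurable).mpr (hZ2 s)).integrable
      one_le_two
  have hYm : ∀ s, Measurable[MeasurableSpace.comap (Z s) inferInstance] (Y s) := fun s =>
    ((measurable_clip B).comp (comap_measurable (Z s))).sub_const (m s)
  have hYb : ∀ s ω, |Y s ω| ≤ 2 * B := fun s ω => by
    have h1 := abs_sub (clip B (Z s ω)) (m s)
    linarith [abs_clip_le hB.le (Z s ω), hmB s]
  have hY0 : ∀ s, ∫ ω, Y s ω ∂P = 0 := fun s => by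
    rw [integral_sub (hclipi s) (integrable_const _)]; simp [hm]
  have hYσ : ∀ s, ∫ ω, Y s ω ^ 2 ∂P ≤ σ2 := fun s => by
    have e := ProbabilityTheory.variance_eq_integral (μ := P) (hclipm s).aemeasurable
    have e' := ProbabilityTheory.variance_le_expectation_sq (μ := P)
      (hclipm s).aestronglyMeasurable
    rw [e] at e'
    refine e'.trans ((integral_mono_of_nonneg (Eventually.of_forall fun ω => sq_nonneg _) (hZ2 s)
      (Eventually.of_forall fun ω => ?_)).trans (hvar s))
    exact clip_sq_le hB.le _
  have hdi : ∀ s, Integrable (fun ω => Z s ω - clip B (Z s ω)) P := fun s =>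
    (hZi s).sub (hclipi s)
  have htailL : ∀ s, ∫ ω, |Z s ω - clip B (Z s ω)| ∂P ≤ L := fun s =>
    integral_abs_sub_clip_le (hZ s) h0 h1 hτ (htail s) hB
  have hRi : ∀ s, Integrable (fun ω => Z s ω - Y s ω) P := fun s =>
    (hZi s).sub ((hclipi s).sub (integrable_const _))
  have hRL : ∀ s, ∫ ω, |Z s ω - Y s ω| ∂P ≤ 2 * L := fun s => by
    have hmL : |m s| ≤ L := by
      have e : ∫ ω, (Z s ω - clip B (Z s ω)) ∂P = -m s := by
        rw [integral_sub (hZi s) (hclipi s), hmean, zero_sub]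
      rw [← abs_neg, ← e]
      exact abs_integral_le_integral_abs.trans (htailL s)
    calc ∫ ω, |Z s ω - Y s ω| ∂P ≤ ∫ ω, (|Z s ω - clip B (Z s ω)| + |m s|) ∂P :=
          integral_mono (hRi s).abs ((hdi s).abs.add (integrable_const _)) fun ω => by
            have : Z s ω - Y s ω = (Z s ω - clip B (Z s ω)) + m s := by simp only [hY]; ring
            simp only [this]
            exact abs_add_le _ _
      _ = ∫ ω, |Z s ω - clip B (Z s ω)| ∂P + |m s| := by
          rw [integral_add (hdi s).abs (integrable_const _)]; simp
      _ ≤ 2 * L := by linarith [htailL s]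
  have hrem : P.real {ω | ε / 6 ≤ |∑ s ∈ obsIdx n, (Z s ω - Y s ω)|} ≤
      12 / ε * L * (obsIdx n).card := by
    have hmk := mul_meas_ge_le_integral_of_nonneg (μ := P)
      (f := fun ω => |∑ s ∈ obsIdx n, (Z s ω - Y s ω)|)
      (Eventually.of_forall fun ω => abs_nonneg _)
      (integrable_finsetSum _ fun s _ => hRi s).abs (ε / 6)
    have hle : ∫ ω, |∑ s ∈ obsIdx n, (Z s ω - Y s ω)| ∂P ≤ (obsIdx n).card * (2 * L) := by
      calc _ ≤ ∫ ω, ∑ s ∈ obsIdx n, |Z s ω - Y s ω| ∂P :=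
            integral_mono (integrable_finsetSum _ fun s _ => hRi s).abs
              (integrable_finsetSum _ fun s _ => (hRi s).abs)
              fun ω => Finset.abs_sum_le_sum_abs _ _
        _ = ∑ s ∈ obsIdx n, ∫ ω, |Z s ω - Y s ω| ∂P :=
            integral_finsetSum _ fun s _ => (hRi s).abs
        _ ≤ (obsIdx n).card • (2 * L) := Finset.sum_le_card_nsmul _ _ _ fun s _ => hRL s
        _ = _ := nsmul_eq_mul _ _
    have := hmk.trans hle
    rw [← le_div_iff₀' (by positivity)] at this
    refine this.trans_eq ?_
    field_simp
    ring
  have hq1 : ∀ i, 1 ≤ q i := fun i => (hPQ i).1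
  have hqp : ∀ i, q i ≤ p i := fun i => (hPQ i).2.1
  have hpq : ∀ i, q i + p i < n i := fun i => (hPQ i).2.2.2
  have hPpos : 0 < ∏ i, (p i : ℝ) :=
    Finset.prod_pos fun i _ => by exact_mod_cast (hq1 i).trans (hqp i)
  have he1 : 1 ≤ Real.exp 1 := Real.one_le_exp zero_le_one
  have hbd := measureReal_abs_sum_obsIdx_ge_le hZ hYm hYb hY0 hYσ hq1 hqp hpq
    (pmax := pmax) (qmin := qmin) (fun i => Finset.le_sup' p (Finset.mem_univ i))
    (fun i => Finset.inf'_le q (Finset.mem_univ i)) (lam := 2 / 5 * β)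
    (D := 12 * Real.sqrt (Real.exp 1)) (by positivity)
    (by
      have h3 : 2 ^ (N + 1) * B * (∏ i, (p i : ℝ)) * β ≤
          2 ^ (N + 1) * B * (∏ i, (p i : ℝ)) * Real.exp 1 * β := by
        have : 0 ≤ 2 ^ (N + 1) * B * (∏ i, (p i : ℝ)) * β := by positivity
        nlinarith
      rw [pow_succ] at h3 hβc
      linarith)
    (by linarith [Real.one_le_sqrt.mpr he1]) (5 * ε / 6)
  have hsplit : {ω | ε < |∑ s ∈ obsIdx n, Z s ω|} ⊆
      {ω | ε / 6 ≤ |∑ s ∈ obsIdx n, (Z s ω - Y s ω)|} ∪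
        {ω | 5 * ε / 6 ≤ |∑ s ∈ obsIdx n, Y s ω|} := by
    intro ω hω
    rw [Set.mem_ofPred_eq] at hω
    rw [Set.mem_union, Set.mem_ofPred_eq, Set.mem_ofPred_eq]
    by_contra! hcon
    have e : ∑ s ∈ obsIdx n, Z s ω =
        ∑ s ∈ obsIdx n, (Z s ω - Y s ω) + ∑ s ∈ obsIdx n, Y s ω := by
      rw [← Finset.sum_add_distrib]; simp
    have := abs_add_le (∑ s ∈ obsIdx n, (Z s ω - Y s ω)) (∑ s ∈ obsIdx n, Y s ω)
    rw [← e] at this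
    linarith [hcon.1, hcon.2]
  rw [← ofReal_measureReal]
  refine ENNReal.ofReal_le_ofReal (((measureReal_mono hsplit).trans
    (measureReal_union_le _ _)).trans (add_le_add (hrem.trans_eq ?_) (hbd.trans ?_)))
  · rw [hL]; field_simp
  have habar : 0 ≤ abar P Z pmax :=
    Finset.sum_nonneg fun u _ => mul_nonneg (by positivity) (alphaMix_nonneg u)
  have hσ0 : 0 ≤ σ2 := (integral_nonneg fun ω => sq_nonneg _).trans (hvar 0)
  set A := abar P Z pmax
  set C : ℝ := 2 * N * 3 ^ (N - 1) with hC
  have hC0 : 0 ≤ C := by positivity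
  have hexp3 : Real.exp ((2 ^ N * (2 / 5 * β)) ^ 2 * ((∏ i, (n i : ℝ)) *
      (σ2 + 4 * (2 * B) ^ 2 * (C * A)))) ≤
      Real.exp (2 ^ (3 * N) * β ^ 2 * Real.exp 1 * (σ2 + 48 * B ^ 2 * C * A) *
        ∏ i, (n i : ℝ)) := by
    have h2N : ((2 : ℝ) ^ N) ^ 2 ≤ 2 ^ (3 * N) := by
      rw [← pow_mul]
      exact pow_le_pow_right₀ one_le_two (by omega)
    have hcoef : (2 ^ N * (2 / 5 * β)) ^ 2 ≤ 2 ^ (3 * N) * β ^ 2 * Real.exp 1 := by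
      calc (2 ^ N * (2 / 5 * β)) ^ 2 = ((2 : ℝ) ^ N) ^ 2 * β ^ 2 * (4 / 25) := by ring
        _ ≤ 2 ^ (3 * N) * β ^ 2 * Real.exp 1 := by
          gcongr
          linarith
    have hvarle : σ2 + 4 * (2 * B) ^ 2 * (C * A) ≤ σ2 + 48 * B ^ 2 * C * A := by
      have : 0 ≤ B ^ 2 * C * A := by positivity
      nlinarith
    rw [mul_assoc (2 ^ (3 * N) * β ^ 2 * Real.exp 1), mul_comm (_ + _) (∏ i, (n i : ℝ))]
    gcongr
  have hexp2 : -(2 / 5 * β) * (5 * ε / 6) = -β * ε / 3 := by ring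
  rw [hexp2]
  calc _ ≤ 2 * (Real.exp (-β * ε / 3) * (Real.exp (12 * Real.sqrt (Real.exp 1) *
        (2 ^ N * ((∏ i, (n i : ℝ)) / ∏ i, (p i : ℝ))) * alphaMix P Z qmin ^
        ((∏ i, (p i : ℝ)) / ((∏ i, (n i : ℝ)) * (2 ^ N + 1)))) *
        Real.exp (2 ^ (3 * N) * β ^ 2 * Real.exp 1 * (σ2 + 48 * B ^ 2 * C * A) *
        ∏ i, (n i : ℝ)))) := by gcongr
    _ = _ := by
      rw [← mul_assoc (12 * Real.sqrt (Real.exp 1))]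
      ring
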